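/- For every p > 1, the Wasserstein space 𝒲_p(ℝ²) over ℝ² with the maximum metric is diagonally rigid: for every isometry Φ : 𝒲_p(ℝ²) → 𝒲_p(ℝ²) there exists an isometry T of (ℝ², d_m) such that (Φ ∘ T_#)(μ) = μ for every μ ∈ 𝒲_p(ℝ²) whose support is contained in L₊ or in L₋. -/

import Mathlib

open MeasureTheory

/-- The `p`-Wasserstein distance between two measures, defined as the infimum over all
couplings `π` of `μ` and `ν` of `(∬ d(x,y)^p dπ)^(1/p)`. -/
noncomputable def Wdist {X : Type*} [MeasurableSpace X] [PseudoMetricSpace X] (p : ℝ)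
    (μ ν : Measure X) : ℝ :=
  (⨅ π ∈ {π : Measure (X × X) | π.map Prod.fst = μ ∧ π.map Prod.snd = ν},
    (∫⁻ q, edist q.1 q.2 ^ p ∂π) ^ (1 / p)).toReal

/-- The `p`-Wasserstein space over `X`: Borel probability measures on `X` with finite
`p`-th moment. -/
def WSet (X : Type*) [MeasurableSpace X] [PseudoMetricSpace X] (p : ℝ) : Set (Measure X) :=
  {μ | IsProbabilityMeasure μ ∧ ∃ x₀ : X, ∫⁻ x, edist x x₀ ^ p ∂μ < ⊤}

/-- An isometry of the underlying metric space: a distance-preserving bijection. -/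
def IsIsom {X : Type*} [PseudoMetricSpace X] (T : X → X) : Prop :=
  Function.Bijective T ∧ ∀ x y, dist (T x) (T y) = dist x y

/-- An isometry of the `p`-Wasserstein space over `X`: a bijection of the space of
probability measures with finite `p`-th moment preserving the Wasserstein distance. -/
def IsWIsometry (X : Type*) [MeasurableSpace X] [PseudoMetricSpace X] (p : ℝ)
    (Φ : Measure X → Measure X) : Prop :=
  Set.BijOn Φ (WSet X p) (WSet X p) ∧
    ∀ μ ∈ WSet X p, ∀ ν ∈ WSet X p, Wdist p (Φ μ) (Φ ν) = Wdist p μ ν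

/-- The (topological) support of a measure. -/
def msupport {X : Type*} [TopologicalSpace X] [MeasurableSpace X] (μ : Measure X) : Set X :=
  {x | ∀ U : Set X, IsOpen U → x ∈ U → μ U ≠ 0}

def diagLine (ε a : ℝ) : Set (ℝ × ℝ) := {z | z.2 = ε * z.1 + a}

def Lplus : Set (ℝ × ℝ) := {z | z.2 = z.1}

def Lminus : Set (ℝ × ℝ) := {z | z.2 = -z.1}

/-- The closed square `Q = [-1,1]²`. -/
abbrev Qs : Set (ℝ × ℝ) := Set.Icc (-1, -1) (1, 1)

def LplusQ : Set ↥Qs := {q | (q : ℝ × ℝ).2 = (q : ℝ × ℝ).1}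

def LminusQ : Set ↥Qs := {q | (q : ℝ × ℝ).2 = -(q : ℝ × ℝ).1}



namespace WRigid

abbrev E := ℝ × ℝ

lemma dirac_mem (p : ℝ) (hp : 1 < p) (x : E) : Measure.dirac x ∈ WSet E p := by
  refine ⟨inferInstance, x, ?_⟩
  rw [lintegral_dirac]
  simp [ENNReal.zero_rpow_of_pos (by linarith : 0 < p)]

lemma lint_lt_top {p : ℝ} (hp : 1 < p) {μ : Measure E} (hμ : μ ∈ WSet E p) (x : E) :
    ∫⁻ y, edist y x ^ p ∂μ < ⊤ := by
  obtain ⟨hprob, x₀, hx⟩ := hμ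
  have h : ∀ y : E, edist y x ^ p ≤
      (2 : ENNReal) ^ (p - 1) * (edist y x₀ ^ p + edist x₀ x ^ p) := fun y =>
    (ENNReal.rpow_le_rpow (edist_triangle y x₀ x) (by linarith)).trans
      (ENNReal.rpow_add_le_mul_rpow_add_rpow _ _ hp.le)
  refine (lintegral_mono h).trans_lt ?_
  rw [lintegral_const_mul _ (by fun_prop), lintegral_add_right _ (by fun_prop), lintegral_const]
  refine ENNReal.mul_lt_top (ENNReal.rpow_lt_top_of_nonneg (by linarith) (by simp)) ?_
  refine ENNReal.add_lt_top.2 ⟨hx, ?_⟩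
  simp only [measure_univ, mul_one]
  exact ENNReal.rpow_lt_top_of_nonneg (by linarith) (edist_ne_top _ _)

lemma edist_rpow {p : ℝ} (hp : 1 < p) (x y : E) :
    edist x y ^ p = ENNReal.ofReal (dist x y ^ p) := by
  rw [edist_dist, ENNReal.ofReal_rpow_of_nonneg dist_nonneg (by linarith)]

lemma integrable_dist {p : ℝ} (hp : 1 < p) {μ : Measure E} (hμ : μ ∈ WSet E p) (x : E) :
    Integrable (fun y => dist y x ^ p) μ := by
  have hm : Measurable (fun y : E => dist y x ^ p) := by fun_prop
  refine ⟨hm.aestronglyMeasurable, ?_⟩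
  rw [hasFiniteIntegral_iff_ofReal (Filter.Eventually.of_forall fun y =>
    Real.rpow_nonneg dist_nonneg p)]
  simp_rw [← edist_rpow hp]
  exact lint_lt_top hp hμ x

lemma ofReal_int {p : ℝ} (hp : 1 < p) {μ : Measure E} (hμ : μ ∈ WSet E p) (x : E) :
    ∫⁻ y, edist y x ^ p ∂μ = ENNReal.ofReal (∫ y, dist y x ^ p ∂μ) := by
  rw [ofReal_integral_eq_lintegral_ofReal (integrable_dist hp hμ x)
    (Filter.Eventually.of_forall fun y => Real.rpow_nonneg dist_nonneg p)]
  simp_rw [edist_rpow hp]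

lemma mem_of_finite {p : ℝ} {μ : Measure E} (h : IsProbabilityMeasure μ) (x : E)
    (hx : ∫⁻ y, edist y x ^ p ∂μ < ⊤) : μ ∈ WSet E p := ⟨h, x, hx⟩

lemma int_nonneg (p : ℝ) (μ : Measure E) (x : E) : 0 ≤ ∫ y, dist y x ^ p ∂μ :=
  integral_nonneg fun _ => Real.rpow_nonneg dist_nonneg p

lemma W_dirac_right {p : ℝ} (hp : 1 < p) {μ : Measure E} (hμ : μ ∈ WSet E p) (x : E) :
    Wdist p μ (Measure.dirac x) = (∫ y, dist y x ^ p ∂μ) ^ (1 / p) := by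
  have := hμ.1
  have key : ∀ π : Measure (E × E), π.map Prod.fst = μ → π.map Prod.snd = Measure.dirac x →
      ∫⁻ q, edist q.1 q.2 ^ p ∂π = ∫⁻ y, edist y x ^ p ∂μ := by
    intro π h1 h2
    have hae : ∀ᵐ q ∂π, q.2 = x := by
      have : ∀ᵐ z ∂(π.map Prod.snd), z = x := by
        rw [h2]; exact (ae_dirac_iff (measurableSet_singleton x)).2 rfl
      exact ae_of_ae_map (by fun_prop) this
    rw [← h1, lintegral_map (by fun_prop) measurable_fst]
    refine lintegral_congr_ae ?_
    filter_upwards [hae] with q hq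
    rw [hq]
  have : (⨅ π ∈ {π : Measure (E × E) | π.map Prod.fst = μ ∧ π.map Prod.snd = Measure.dirac x},
    (∫⁻ q, edist q.1 q.2 ^ p ∂π) ^ (1 / p)) = (∫⁻ y, edist y x ^ p ∂μ) ^ (1 / p) := by
    apply le_antisymm
    · refine (iInf₂_le (μ.prod (Measure.dirac x)) ?_).trans ?_
      · constructor
        · simp [Measure.map_fst_prod]
        · simp [Measure.map_snd_prod]
      · rw [key]
        · simp [Measure.map_fst_prod]
        · simp [Measure.map_snd_prod]
    · refine le_iInf₂ fun π hπ => ?_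
      rw [key π hπ.1 hπ.2]
  unfold Wdist
  rw [this, ofReal_int hp hμ, ENNReal.ofReal_rpow_of_nonneg (int_nonneg _ _ _) (by positivity),
    ENNReal.toReal_ofReal (Real.rpow_nonneg (int_nonneg _ _ _) _)]

lemma W_dirac_left {p : ℝ} (hp : 1 < p) {μ : Measure E} (hμ : μ ∈ WSet E p) (x : E) :
    Wdist p (Measure.dirac x) μ = (∫ y, dist y x ^ p ∂μ) ^ (1 / p) := by
  have := hμ.1
  have key : ∀ π : Measure (E × E), π.map Prod.snd = μ → π.map Prod.fst = Measure.dirac x →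
      ∫⁻ q, edist q.1 q.2 ^ p ∂π = ∫⁻ y, edist y x ^ p ∂μ := by
    intro π h1 h2
    have hae : ∀ᵐ q ∂π, q.1 = x := by
      have : ∀ᵐ z ∂(π.map Prod.fst), z = x := by
        rw [h2]; exact (ae_dirac_iff (measurableSet_singleton x)).2 rfl
      exact ae_of_ae_map (by fun_prop) this
    rw [← h1, lintegral_map (by fun_prop) measurable_snd]
    refine lintegral_congr_ae ?_
    filter_upwards [hae] with q hq
    rw [hq, edist_comm]
  have : (⨅ π ∈ {π : Measure (E × E) | π.map Prod.fst = Measure.dirac x ∧ π.map Prod.snd = μ},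
    (∫⁻ q, edist q.1 q.2 ^ p ∂π) ^ (1 / p)) = (∫⁻ y, edist y x ^ p ∂μ) ^ (1 / p) := by
    apply le_antisymm
    · refine (iInf₂_le ((Measure.dirac x).prod μ) ?_).trans ?_
      · constructor
        · simp [Measure.map_fst_prod]
        · simp [Measure.map_snd_prod]
      · rw [key]
        · simp [Measure.map_snd_prod]
        · simp [Measure.map_fst_prod]
    · refine le_iInf₂ fun π hπ => ?_
      rw [key π hπ.2 hπ.1]
  unfold Wdist
  rw [this, ofReal_int hp hμ, ENNReal.ofReal_rpow_of_nonneg (int_nonneg _ _ _) (by positivity),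
    ENNReal.toReal_ofReal (Real.rpow_nonneg (int_nonneg _ _ _) _)]

lemma W_le_coupling {p : ℝ} (hp : 1 < p) (π : Measure (E × E)) {C : ℝ} (hC : 0 ≤ C)
    (h : ∫⁻ q, edist q.1 q.2 ^ p ∂π ≤ ENNReal.ofReal C) :
    Wdist p (π.map Prod.fst) (π.map Prod.snd) ≤ C ^ (1 / p) := by
  unfold Wdist
  refine ENNReal.toReal_le_of_le_ofReal (Real.rpow_nonneg hC _) ?_
  refine (iInf₂_le π ⟨rfl, rfl⟩).trans ?_
  rw [← ENNReal.ofReal_rpow_of_nonneg hC (by positivity)]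
  exact ENNReal.rpow_le_rpow h (by positivity)

/-- Metric extension property characterizing the Dirac masses. -/
def P (p : ℝ) (μ : Measure E) : Prop :=
  ∀ ν ∈ WSet E p, ∃ ξ ∈ WSet E p, Wdist p μ ξ = 2 * Wdist p μ ν ∧ Wdist p ν ξ ≤ Wdist p μ ν

lemma P_dirac {p : ℝ} (hp : 1 < p) (x : E) : P p (Measure.dirac x) := by
  intro ν hν
  have := hν.1
  let S : E → E := fun y => y + (y - x)
  have hS : Measurable S := by fun_prop
  have hd : ∀ y, dist (S y) x = 2 * dist y x := by
    intro y
    have : S y - x = (2 : ℝ) • (y - x) := by simp only [S, two_smul]; abel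
    rw [dist_eq_norm, this, norm_smul, dist_eq_norm]; simp
  have hd2 : ∀ y, dist y (S y) = dist y x := by
    intro y
    simp [S, dist_eq_norm, norm_sub_rev]
  have hprob : IsProbabilityMeasure (ν.map S) := Measure.isProbabilityMeasure_map hS.aemeasurable
  have hint : ∫ y, dist y x ^ p ∂(ν.map S) = 2 ^ p * ∫ y, dist y x ^ p ∂ν := by
    rw [integral_map hS.aemeasurable (by
      have : Measurable (fun y : E => dist y x ^ p) := by fun_prop
      exact this.aestronglyMeasurable), ← integral_const_mul]
    congr 1; ext y
    rw [hd, Real.mul_rpow (by norm_num) dist_nonneg]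
  have hmem : ν.map S ∈ WSet E p := by
    refine ⟨hprob, x, ?_⟩
    rw [lintegral_map (by fun_prop) hS]
    have : ∀ y, edist (S y) x ^ p = 2 ^ p * edist y x ^ p := by
      intro y
      rw [edist_dist, hd, ENNReal.ofReal_mul (by norm_num), ← edist_dist,
        ENNReal.mul_rpow_of_nonneg _ _ (by linarith)]
      simp
    simp_rw [this]
    rw [lintegral_const_mul _ (by fun_prop)]
    exact ENNReal.mul_lt_top (ENNReal.rpow_lt_top_of_nonneg (by linarith) (by simp))
      (lint_lt_top hp hν x)
  refine ⟨ν.map S, hmem, ?_, ?_⟩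
  · rw [W_dirac_left hp hmem, W_dirac_left hp hν, hint,
      Real.mul_rpow (by positivity) (int_nonneg _ _ _), ← Real.rpow_mul (by norm_num)]
    rw [mul_one_div_cancel (by linarith), Real.rpow_one]
  · rw [W_dirac_left hp hν]
    have hpair : Measurable (fun y => (y, S y)) := measurable_id.prodMk hS
    have h := W_le_coupling hp (ν.map (fun y => (y, S y))) (int_nonneg p ν x) (by
      rw [lintegral_map (by fun_prop) hpair, ← ofReal_int hp hν]
      refine le_of_eq (lintegral_congr fun y => ?_)
      simp only [edist_dist, hd2])
    rw [Measure.map_map measurable_fst hpair, Measure.map_map measurable_snd hpair] at h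
    have e1 : Prod.fst ∘ (fun y => (y, S y)) = id := rfl
    have e2 : Prod.snd ∘ (fun y => (y, S y)) = S := rfl
    rwa [e1, e2, Measure.map_id] at h

lemma eq_dirac_of_ae {μ : Measure E} [IsProbabilityMeasure μ] {x : E} (h : ∀ᵐ y ∂μ, y = x) :
    μ = Measure.dirac x := by
  have : μ.map id = μ.map (fun _ => x) := Measure.map_congr h
  simpa [Measure.map_const] using this

lemma null_compl_support (μ : Measure E) : μ (msupport μ)ᶜ = 0 := by
  refine measure_null_of_locally_null _ fun x hx => ?_
  simp only [msupport, Set.mem_compl_iff, Set.mem_ofPred_eq, not_forall, not_not] at hx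
  obtain ⟨U, hU, hxU, h0⟩ := hx
  exact ⟨U, mem_nhdsWithin_of_mem_nhds (hU.mem_nhds hxU), h0⟩

lemma strict_ineq {p : ℝ} (hp : 1 < p) {a b : ℝ} (ha : 0 ≤ a) (hb : 0 ≤ b) :
    (a + b) ^ p ≤ 2 ^ (p - 1) * (a ^ p + b ^ p) ∧
    ((a + b) ^ p = 2 ^ (p - 1) * (a ^ p + b ^ p) → a = b) := by
  have e : (a + b) ^ p = 2 ^ p * ((1/2) * a + (1/2) * b) ^ p := by
    rw [← Real.mul_rpow (by norm_num) (by positivity)]; congr 1; ring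
  have e2 : (2 : ℝ) ^ (p - 1) = 2 ^ p * (1/2) := by
    rw [Real.rpow_sub_one (by norm_num)]; ring
  have h2 : (0:ℝ) < 2 ^ p := by positivity
  constructor
  · have := (convexOn_rpow hp.le).2 ha hb (show (0:ℝ) ≤ 1/2 by norm_num)
      (show (0:ℝ) ≤ 1/2 by norm_num) (by norm_num)
    simp only [smul_eq_mul] at this
    rw [e, e2]
    nlinarith
  · intro h
    by_contra hab
    have := (strictConvexOn_rpow hp).2 ha hb hab (show (0:ℝ) < 1/2 by norm_num)
      (show (0:ℝ) < 1/2 by norm_num) (by norm_num)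
    simp only [smul_eq_mul] at this
    rw [e, e2] at h
    nlinarith

lemma dirac_of_P {p : ℝ} (hp : 1 < p) {μ : Measure E} (hμ : μ ∈ WSet E p) (h : P p μ) :
    ∃ x, μ = Measure.dirac x := by
  have := hμ.1
  have hne : (msupport μ).Nonempty := by
    by_contra hne
    rw [Set.not_nonempty_iff_eq_empty] at hne
    have := null_compl_support μ
    rw [hne] at this
    simp at this
  obtain ⟨x, hx⟩ := hne
  obtain ⟨ξ, hξ, h1, h2⟩ := h _ (dirac_mem p hp x)
  have := hξ.1
  rw [W_dirac_right hp hμ] at h1 h2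
  rw [W_dirac_left hp hξ] at h2
  set A := ∫ y, dist y x ^ p ∂μ with hA
  set B := ∫ y, dist y x ^ p ∂ξ with hB
  have hA0 : 0 ≤ A := int_nonneg _ _ _
  have hB0 : 0 ≤ B := int_nonneg _ _ _
  have hBA : B ≤ A := (Real.rpow_le_rpow_iff hB0 hA0 (by positivity)).1 h2
  let f : E × E → ℝ := fun q => (dist q.1 x + dist q.2 x) ^ p
  let g : E × E → ℝ := fun q => 2 ^ (p - 1) * (dist q.1 x ^ p + dist q.2 x ^ p)
  have hf0 : ∀ q, 0 ≤ f q := fun q => by positivity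
  have hfg : ∀ q, f q ≤ g q := fun q => (strict_ineq hp dist_nonneg dist_nonneg).1
  have hi1 : Integrable (fun q : E × E => dist q.1 x ^ p) (μ.prod ξ) :=
    (integrable_dist hp hμ x).comp_fst ξ
  have hi2 : Integrable (fun q : E × E => dist q.2 x ^ p) (μ.prod ξ) :=
    (integrable_dist hp hξ x).comp_snd μ
  have hgi : Integrable g (μ.prod ξ) := (hi1.add hi2).const_mul _
  have hfm : Measurable f := by fun_prop
  have hfi : Integrable f (μ.prod ξ) := hgi.mono' hfm.aestronglyMeasurable
    (Filter.Eventually.of_forall fun q => by rw [Real.norm_of_nonneg (hf0 q)]; exact hfg q)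
  have hgint : ∫ q, g q ∂(μ.prod ξ) = 2 ^ (p - 1) * (A + B) := by
    simp only [g]
    rw [integral_const_mul, integral_add hi1 hi2]
    congr 2
    · rw [integral_fun_fst (μ := μ) (ν := ξ) (f := fun y => dist y x ^ p)]; simp [hA]
    · rw [integral_fun_snd (μ := μ) (ν := ξ) (f := fun y => dist y x ^ p)]; simp [hB]
  have hf_int0 : 0 ≤ ∫ q, f q ∂(μ.prod ξ) := integral_nonneg hf0
  have hW : Wdist p μ ξ ≤ (∫ q, f q ∂(μ.prod ξ)) ^ (1 / p) := by
    have := W_le_coupling hp (μ.prod ξ) hf_int0 (by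
      rw [ofReal_integral_eq_lintegral_ofReal hfi (Filter.Eventually.of_forall hf0)]
      refine lintegral_mono fun q => ?_
      rw [edist_rpow hp]
      refine ENNReal.ofReal_le_ofReal (Real.rpow_le_rpow dist_nonneg ?_ (by linarith))
      exact dist_triangle_right _ _ _)
    simpa [Measure.map_fst_prod, Measure.map_snd_prod] using this
  rw [h1] at hW
  have h3 : 2 ^ p * A ≤ ∫ q, f q ∂(μ.prod ξ) := by
    rw [← Real.rpow_le_rpow_iff (z := 1 / p) (by positivity) hf_int0 (by positivity),
      Real.mul_rpow (by positivity) hA0, ← Real.rpow_mul (by norm_num),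
      mul_one_div_cancel (by linarith), Real.rpow_one]
    exact hW
  have h4 : ∫ q, (g q - f q) ∂(μ.prod ξ) = 0 := by
    apply le_antisymm
    · rw [integral_sub hgi hfi, hgint]
      have e2 : (2 : ℝ) ^ (p - 1) = 2 ^ p * (1/2) := by
        rw [Real.rpow_sub_one (by norm_num)]; ring
      have : (0:ℝ) < 2 ^ p := by positivity
      rw [e2]
      nlinarith
    · exact integral_nonneg fun q => sub_nonneg.2 (hfg q)
  rw [integral_eq_zero_iff_of_nonneg (fun q => sub_nonneg.2 (hfg q)) (hgi.sub hfi)] at h4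
  have h5 : ∀ᵐ q ∂(μ.prod ξ), dist q.1 x = dist q.2 x := by
    filter_upwards [h4] with q hq
    refine (strict_ineq hp dist_nonneg dist_nonneg).2 ?_
    have : g q - f q = 0 := hq
    simp only [g, f] at this
    linarith
  have h6 : ∃ c, ∀ᵐ y ∂μ, dist y x = c := by
    have h7 : ∀ᵐ q ∂(ξ.prod μ), dist q.2 x = dist q.1 x := by
      rw [← Measure.prod_swap] at h5
      exact ae_of_ae_map measurable_swap.aemeasurable h5
    obtain ⟨z, hz⟩ := (Measure.ae_ae_of_ae_prod h7).exists
    exact ⟨dist z x, hz⟩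
  obtain ⟨c, hc⟩ := h6
  refine ⟨x, eq_dirac_of_ae ?_⟩
  have hc0 : c ≤ 0 := by
    by_contra hcp
    push Not at hcp
    refine hx (Metric.ball x c) Metric.isOpen_ball (Metric.mem_ball_self hcp) ?_
    refine measure_mono_null (fun y hy => ?_) hc
    simp only [Metric.mem_ball] at hy
    exact hy.ne
  filter_upwards [hc] with y hy
  exact dist_le_zero.1 (hy.trans_le hc0)

/-! ### The potential determines the two diagonal marginals -/

open Filter Topology in
lemma asymp {p : ℝ} (hp : 1 < p) {μ : Measure E} (hμ : μ ∈ WSet E p) (c e : ℝ)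
    (he : e = 1 ∨ e = -1) :
    Tendsto (fun n : ℕ => ((n : ℝ) + 1) * ((∫ y, dist y (c + ((n : ℝ) + 1), e * ((n : ℝ) + 1)) ^ p ∂μ)
      / ((n : ℝ) + 1) ^ p - 1))
      atTop (𝓝 (∫ y, p * max (c - y.1) (- e * y.2) ∂μ)) := by
  have := hμ.1
  have hint := fun n : ℕ => integrable_dist hp hμ (c + ((n : ℝ) + 1), e * ((n : ℝ) + 1))
  have key : Tendsto (fun n : ℕ => ∫ y, ((n : ℝ) + 1) *
      (dist y (c + ((n : ℝ) + 1), e * ((n : ℝ) + 1)) ^ p / ((n : ℝ) + 1) ^ p - 1) ∂μ)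
      atTop (𝓝 (∫ y, p * max (c - y.1) (- e * y.2) ∂μ)) := by
    refine tendsto_integral_of_dominated_convergence
      (fun y => p * dist y (c, 0) + (1 + dist y (c, 0)) ^ p) ?_ ?_ ?_ ?_
    · intro n
      have hm : Measurable (fun y : E => ((n : ℝ) + 1) *
        (dist y (c + ((n : ℝ) + 1), e * ((n : ℝ) + 1)) ^ p / ((n : ℝ) + 1) ^ p - 1)) := by fun_prop
      exact hm.aestronglyMeasurable
    · have hd := integrable_dist hp hμ (c, 0)
      have h1 : Integrable (fun y : E => (1 + dist y (c, 0)) ^ p) μ := by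
        refine ((((integrable_const (1 : ℝ)).add hd)).const_mul (2 ^ (p - 1))).mono' ?_ ?_
        · have hm : Measurable (fun y : E => (1 + dist y (c, 0)) ^ p) := by fun_prop
          exact hm.aestronglyMeasurable
        · refine Eventually.of_forall fun y => ?_
          rw [Real.norm_of_nonneg (by positivity)]
          simpa using (strict_ineq hp zero_le_one (dist_nonneg (x := y) (y := (c, 0)))).1
      refine Integrable.add (Integrable.const_mul (h1.mono' ?_ ?_) p) h1
      · have hm : Measurable (fun y : E => dist y (c, 0)) := by fun_prop
        exact hm.aestronglyMeasurable
      · refine Eventually.of_forall fun y => ?_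
        rw [Real.norm_of_nonneg dist_nonneg]
        have h0 := dist_nonneg (x := y) (y := ((c, 0) : E))
        have := Real.self_le_rpow_of_one_le (x := 1 + dist y ((c, 0) : E)) (by linarith) hp.le
        linarith
    · intro n
      refine Eventually.of_forall fun y => ?_
      set R : ℝ := (n : ℝ) + 1 with hR
      have hR1 : 1 ≤ R := by simp [hR]
      have hR0 : 0 < R := by linarith
      set D := dist y ((c, 0) : E) with hD
      have hD0 : 0 ≤ D := dist_nonneg
      have hcx : dist ((c, 0) : E) (c + R, e * R) = R := by
        rw [Prod.dist_eq]
        rcases he with rfl | rfl <;> simp [Real.dist_eq, abs_of_pos hR0]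
      set d := dist y ((c + R, e * R) : E) with hd
      have hd0 : 0 ≤ d := dist_nonneg
      have hu : d ≤ D + R := by
        have := dist_triangle y ((c, 0) : E) (c + R, e * R)
        rw [hcx] at this; exact this
      have hl : R ≤ D + d := by
        have := dist_triangle_left ((c, 0) : E) (c + R, e * R) y
        rw [hcx] at this; exact this
      rw [← Real.div_rpow hd0 hR0.le, Real.norm_eq_abs, abs_le]
      constructor
      · have hb := one_add_mul_self_le_rpow_one_add (s := d / R - 1)
          (by have : 0 ≤ d / R := by positivity
              linarith) hp.le
        have e1 : 1 + (d / R - 1) = d / R := by ring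
        rw [e1] at hb
        have h2 : R * (p * (d / R - 1)) ≤ R * ((d / R) ^ p - 1) :=
          mul_le_mul_of_nonneg_left (by linarith) hR0.le
        have h3 : R * (p * (d / R - 1)) = p * (d - R) := by field_simp
        have h4 : 0 ≤ (1 + D) ^ p := by positivity
        have : p * (R - d) ≤ p * D := mul_le_mul_of_nonneg_left (by linarith) (by linarith)
        linarith
      · have h1 : (d / R) ^ p ≤ (1 - 1 / R) * 1 ^ p + (1 / R) * (1 + D) ^ p := by
          have hcv := (convexOn_rpow hp.le).2 (show (1 : ℝ) ∈ Set.Ici (0 : ℝ) by simp)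
            (show 1 + D ∈ Set.Ici (0 : ℝ) by simp only [Set.mem_Ici]; linarith)
            (show 0 ≤ 1 - 1 / R by rw [sub_nonneg, div_le_one hR0]; exact hR1)
            (show 0 ≤ 1 / R by positivity) (by ring)
          simp only [smul_eq_mul] at hcv
          refine le_trans (Real.rpow_le_rpow (by positivity) ?_ (by linarith)) hcv
          rw [div_le_iff₀ hR0]
          have : ((1 - 1 / R) * 1 + 1 / R * (1 + D)) * R = R + D := by field_simp; ring
          rw [this]; linarith
        rw [Real.one_rpow] at h1
        have h2 : R * ((d / R) ^ p - 1) ≤ R * (((1 - 1 / R) * 1 + (1 / R) * (1 + D) ^ p) - 1) :=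
          mul_le_mul_of_nonneg_left (by linarith) hR0.le
        have h3 : R * (((1 - 1 / R) * 1 + (1 / R) * (1 + D) ^ p) - 1) = (1 + D) ^ p - 1 := by
          field_simp; ring
        have : 0 ≤ p * D := by positivity
        linarith
    · refine Eventually.of_forall fun y => ?_
      set m := max (c - y.1) (- e * y.2) with hm
      have hder : HasDerivAt (fun z : ℝ => (1 + m * z) ^ p) (m * p * (1 + m * 0) ^ (p - 1)) 0 := by
        have h1 : HasDerivAt (fun z : ℝ => 1 + m * z) m 0 := by
          simpa using ((hasDerivAt_id (0:ℝ)).const_mul m).const_add 1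
        exact h1.rpow_const (Or.inr hp.le)
      have hsl := hder.tendsto_slope_zero_right
      have hn : Tendsto (fun n : ℕ => ((n : ℝ) + 1)⁻¹) atTop (𝓝[>] 0) := by
        refine tendsto_nhdsWithin_iff.2 ⟨?_, Eventually.of_forall fun n => ?_⟩
        · simpa using tendsto_one_div_add_atTop_nhds_zero_nat (𝕜 := ℝ)
        · simp only [Set.mem_Ioi]; positivity
      have h2 := hsl.comp hn
      have e3 : m * p * (1 + m * 0) ^ (p - 1) = p * m := by simp [mul_comm]
      rw [e3] at h2
      refine h2.congr' ?_
      have hlarge := (tendsto_natCast_atTop_atTop (R := ℝ)).eventually_ge_atTop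
        (|y.1| + |y.2| + |c|)
      filter_upwards [hlarge] with n hn
      set R : ℝ := (n : ℝ) + 1 with hR
      have hR0 : 0 < R := by positivity
      have b1 := abs_le.1 (le_refl |y.1|)
      have b2 := abs_le.1 (le_refl |y.2|)
      have b3 := abs_le.1 (le_refl |c|)
      have a1 := abs_nonneg y.1
      have a2 := abs_nonneg y.2
      have a3 := abs_nonneg c
      have hdist : dist y ((c + R, e * R) : E) = R + m := by
        rw [Prod.dist_eq, Real.dist_eq, Real.dist_eq, hm, ← max_add_add_left]
        congr 1
        · simp only; rw [abs_of_nonpos (by linarith)]; ring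
        · simp only
          rcases he with rfl | rfl
          · rw [abs_of_nonpos (by linarith)]; ring
          · rw [abs_of_nonneg (by linarith)]; ring
      have hRm : 0 ≤ R + m := hdist ▸ dist_nonneg
      rw [hdist, ← Real.div_rpow hRm hR0.le]
      simp only [Function.comp, zero_add, mul_zero, add_zero, Real.one_rpow, smul_eq_mul, inv_inv]
      rw [← hR]
      congr 3
      field_simp
  refine key.congr fun n => ?_
  rw [integral_const_mul, integral_sub ((hint n).div_const _) (integrable_const _), integral_div]
  simp

lemma integrable_max {p : ℝ} (hp : 1 < p) {μ : Measure E} (hμ : μ ∈ WSet E p) (c e : ℝ)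
    (he : e = 1 ∨ e = -1) : Integrable (fun y : E => max (c - y.1) (- e * y.2)) μ := by
  have := hμ.1
  refine ((integrable_const (1 : ℝ)).add (integrable_dist hp hμ (c, 0))).mono' ?_ ?_
  · have hm : Measurable (fun y : E => max (c - y.1) (- e * y.2)) := by fun_prop
    exact hm.aestronglyMeasurable
  · refine Filter.Eventually.of_forall fun y => ?_
    have h1 : ‖max (c - y.1) (- e * y.2)‖ ≤ dist y ((c, 0) : E) := by
      rw [Prod.dist_eq, Real.dist_eq, Real.dist_eq, Real.norm_eq_abs]
      refine abs_max_le_max_abs_abs.trans (le_of_eq ?_)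
      congr 1
      · simp only; exact abs_sub_comm _ _
      · rcases he with rfl | rfl <;> simp
    refine h1.trans ?_
    simp only [Pi.add_apply]
    rcases le_total (dist y ((c, 0) : E)) 1 with h | h
    · have : 0 ≤ dist y ((c, 0) : E) ^ p := by positivity
      linarith
    · have := Real.self_le_rpow_of_one_le h hp.le
      linarith

open Filter Topology in
lemma cdf_tendsto {p : ℝ} (hp : 1 < p) {μ : Measure E} (hμ : μ ∈ WSet E p) (c e : ℝ)
    (he : e = 1 ∨ e = -1) :
    Tendsto (fun n : ℕ => ((n : ℝ) + 1) * ((∫ y, max (c + 1 / ((n : ℝ) + 1) - y.1) (- e * y.2) ∂μ)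
      - ∫ y, max (c - y.1) (- e * y.2) ∂μ)) atTop
      (𝓝 (μ.real {y : E | y.1 - e * y.2 ≤ c})) := by
  have := hμ.1
  have hms : MeasurableSet {y : E | y.1 - e * y.2 ≤ c} :=
    measurableSet_le (by fun_prop) (by fun_prop)
  have key : Tendsto (fun n : ℕ => ∫ y, ((n : ℝ) + 1) *
      (max (c + 1 / ((n : ℝ) + 1) - y.1) (- e * y.2) - max (c - y.1) (- e * y.2)) ∂μ) atTop
      (𝓝 (∫ y, {y : E | y.1 - e * y.2 ≤ c}.indicator (fun _ => (1 : ℝ)) y ∂μ)) := by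
    refine tendsto_integral_of_dominated_convergence (fun _ => (1 : ℝ)) ?_ (integrable_const _)
      ?_ ?_
    · intro n
      have hm : Measurable (fun y : E => ((n : ℝ) + 1) *
        (max (c + 1 / ((n : ℝ) + 1) - y.1) (- e * y.2) - max (c - y.1) (- e * y.2))) := by fun_prop
      exact hm.aestronglyMeasurable
    · intro n
      refine Eventually.of_forall fun y => ?_
      have hR0 : (0 : ℝ) < (n : ℝ) + 1 := by positivity
      rw [norm_mul, Real.norm_of_nonneg hR0.le, Real.norm_eq_abs]
      have := abs_max_sub_max_le_abs (c + 1 / ((n : ℝ) + 1) - y.1) (c - y.1) (- e * y.2)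
      have e1 : c + 1 / ((n : ℝ) + 1) - y.1 - (c - y.1) = 1 / ((n : ℝ) + 1) := by ring
      rw [e1, abs_of_pos (show 0 < 1 / ((n : ℝ) + 1) by positivity)] at this
      calc _ ≤ ((n : ℝ) + 1) * (1 / ((n : ℝ) + 1)) := mul_le_mul_of_nonneg_left this hR0.le
        _ = 1 := by field_simp
    · refine Eventually.of_forall fun y => ?_
      refine Tendsto.congr' ?_ tendsto_const_nhds
      by_cases hy : y.1 - e * y.2 ≤ c
      · refine Eventually.of_forall fun n => ?_
        have hR0 : (0 : ℝ) < (n : ℝ) + 1 := by positivity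
        have hi : 0 < 1 / ((n : ℝ) + 1) := by positivity
        simp only
        rw [Set.indicator_of_mem (by exact hy),
          max_eq_left (show -e * y.2 ≤ c + 1 / ((n : ℝ) + 1) - y.1 by linarith),
          max_eq_left (show -e * y.2 ≤ c - y.1 by linarith)]
        field_simp
        ring
      · have hlim := (tendsto_one_div_add_atTop_nhds_zero_nat (𝕜 := ℝ)).eventually_lt_const
          (show 0 < y.1 - e * y.2 - c by linarith)
        filter_upwards [hlim] with n hn
        rw [Set.indicator_of_notMem (by exact hy),
          max_eq_right (show c + 1 / ((n : ℝ) + 1) - y.1 ≤ -e * y.2 by linarith),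
          max_eq_right (show c - y.1 ≤ -e * y.2 by linarith)]
        ring
  rw [integral_indicator_const _ hms] at key
  simp only [smul_eq_mul, mul_one] at key
  refine key.congr fun n => ?_
  rw [integral_const_mul, integral_sub (integrable_max hp hμ _ e he) (integrable_max hp hμ c e he)]

lemma marginal_eq {p : ℝ} (hp : 1 < p) {μ ν : Measure E} (hμ : μ ∈ WSet E p)
    (hν : ν ∈ WSet E p) (h : ∀ x, ∫ y, dist y x ^ p ∂μ = ∫ y, dist y x ^ p ∂ν) (e : ℝ)
    (he : e = 1 ∨ e = -1) :
    μ.map (fun y : E => y.1 - e * y.2) = ν.map (fun y : E => y.1 - e * y.2) := by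
  have := hμ.1
  have := hν.1
  have h1 : ∀ c, ∫ y, max (c - y.1) (- e * y.2) ∂μ = ∫ y, max (c - y.1) (- e * y.2) ∂ν := by
    intro c
    have a := asymp hp hμ c e he
    simp only [h] at a
    have := tendsto_nhds_unique a (asymp hp hν c e he)
    rw [integral_const_mul, integral_const_mul] at this
    exact mul_left_cancel₀ (by linarith) this
  have hm : Measurable (fun y : E => y.1 - e * y.2) := by fun_prop
  have := Measure.isProbabilityMeasure_map (μ := μ) hm.aemeasurable
  refine Measure.ext_of_Iic _ _ fun c => ?_
  rw [Measure.map_apply hm measurableSet_Iic, Measure.map_apply hm measurableSet_Iic]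
  have a := cdf_tendsto hp hμ c e he
  simp only [h1] at a
  have := tendsto_nhds_unique a (cdf_tendsto hp hν c e he)
  exact (measureReal_eq_measureReal_iff).1 this

lemma eq_of_line {μ ν : Measure E} (e : ℝ) (he : e = 1 ∨ e = -1)
    (h1 : μ.map (fun y : E => y.1 - e * y.2) = ν.map (fun y : E => y.1 - e * y.2))
    (h2 : μ.map (fun y : E => y.1 - (-e) * y.2) = ν.map (fun y : E => y.1 - (-e) * y.2))
    (hs : ∀ᵐ y ∂μ, y.1 - e * y.2 = 0) : μ = ν := by
  have hm : ∀ e : ℝ, Measurable (fun y : E => y.1 - e * y.2) := fun e => by fun_prop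
  have hs' : ∀ᵐ y ∂ν, y.1 - e * y.2 = 0 := by
    have : ∀ᵐ t ∂(μ.map (fun y : E => y.1 - e * y.2)), t = 0 :=
      (ae_map_iff (hm e).aemeasurable (measurableSet_singleton (0 : ℝ))).2 hs
    rw [h1] at this
    exact ae_of_ae_map (hm e).aemeasurable this
  let J : ℝ → E := fun s => (s / 2, e * (s / 2))
  have hJ : Measurable J := by fun_prop
  have key : ∀ ρ : Measure E, (∀ᵐ y ∂ρ, y.1 - e * y.2 = 0) →
      ρ = (ρ.map (fun y : E => y.1 - (-e) * y.2)).map J := by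
    intro ρ hρ
    rw [Measure.map_map hJ (hm _)]
    conv_lhs => rw [← Measure.map_id (μ := ρ)]
    refine Measure.map_congr ?_
    filter_upwards [hρ] with y hy
    ext
    · simp only [id, J, Function.comp]; linarith
    · simp only [id, J, Function.comp]
      rcases he with rfl | rfl <;> linarith
  rw [key μ hs, key ν hs', h2]

lemma P_iff {p : ℝ} {Φ : Measure E → Measure E} (hΦ : IsWIsometry E p Φ) {μ : Measure E}
    (hμ : μ ∈ WSet E p) : P p (Φ μ) ↔ P p μ := by
  obtain ⟨hb, hd⟩ := hΦ
  constructor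
  · intro h ν hν
    obtain ⟨ξ', hξ', h1, h2⟩ := h _ (hb.mapsTo hν)
    obtain ⟨ξ, hξ, rfl⟩ := hb.surjOn hξ'
    rw [hd _ hμ _ hξ, hd _ hμ _ hν] at h1
    rw [hd _ hν _ hξ, hd _ hμ _ hν] at h2
    exact ⟨ξ, hξ, h1, h2⟩
  · intro h ν' hν'
    obtain ⟨ν, hν, rfl⟩ := hb.surjOn hν'
    obtain ⟨ξ, hξ, h1, h2⟩ := h _ hν
    refine ⟨Φ ξ, hb.mapsTo hξ, ?_, ?_⟩
    · rw [hd _ hμ _ hξ, hd _ hμ _ hν, h1]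
    · rw [hd _ hν _ hξ, hd _ hμ _ hν]; exact h2

lemma W_dirac_dirac {p : ℝ} (hp : 1 < p) (x y : E) :
    Wdist p (Measure.dirac x) (Measure.dirac y) = dist x y := by
  rw [W_dirac_right hp (dirac_mem p hp x), integral_dirac, ← Real.rpow_mul dist_nonneg,
    mul_one_div_cancel (by linarith), Real.rpow_one]

end WRigid

open WRigid

/-- Diagonal rigidity of `𝒲_p(ℝ², d_m)` for all `p > 1`: every isometry, composed with
the push-forward of a suitable isometry of the base, fixes all measures supported on
`L₊` or `L₋`. -/
theorem Wp_R2_diagonally_rigid (p : ℝ) (hp : 1 < p)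
    (Φ : Measure (ℝ × ℝ) → Measure (ℝ × ℝ)) (hΦ : IsWIsometry (ℝ × ℝ) p Φ) :
    ∃ T : ℝ × ℝ → ℝ × ℝ, IsIsom T ∧ ∀ μ ∈ WSet (ℝ × ℝ) p,
      (msupport μ ⊆ Lplus ∨ msupport μ ⊆ Lminus) → Φ (μ.map T) = μ := by
  have hb := hΦ.1
  have hd := hΦ.2
  have hex : ∀ x : ℝ × ℝ, ∃ y : ℝ × ℝ, Φ (Measure.dirac y) = Measure.dirac x := by
    intro x
    obtain ⟨μ, hμ, hx⟩ := hb.surjOn (dirac_mem p hp x)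
    have hP : P p (Φ μ) := by rw [hx]; exact P_dirac hp x
    obtain ⟨y, rfl⟩ := dirac_of_P hp hμ ((P_iff hΦ hμ).1 hP)
    exact ⟨y, hx⟩
  choose T hT using hex
  have hiso : ∀ x y, dist (T x) (T y) = dist x y := by
    intro x y
    rw [← W_dirac_dirac hp (T x), ← hd _ (dirac_mem p hp _) _ (dirac_mem p hp _), hT, hT,
      W_dirac_dirac hp]
  have hTi : Isometry T := Isometry.of_dist_eq hiso
  have hTm : Measurable T := hTi.continuous.measurable
  have hsurj : Function.Surjective T := by
    intro y
    have hP : P p (Φ (Measure.dirac y)) := (P_iff hΦ (dirac_mem p hp y)).2 (P_dirac hp y)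
    obtain ⟨z, hz⟩ := dirac_of_P hp (hb.mapsTo (dirac_mem p hp y)) hP
    refine ⟨z, ?_⟩
    have h1 := hd _ (dirac_mem p hp (T z)) _ (dirac_mem p hp y)
    rw [hT, hz, W_dirac_dirac hp, W_dirac_dirac hp, dist_self] at h1
    exact dist_eq_zero.1 h1.symm
  refine ⟨T, ⟨⟨hTi.injective, hsurj⟩, hiso⟩, ?_⟩
  intro μ hμ hsupp
  have := hμ.1
  have hmem : μ.map T ∈ WSet (ℝ × ℝ) p := by
    refine ⟨Measure.isProbabilityMeasure_map hTm.aemeasurable, T 0, ?_⟩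
    rw [lintegral_map (by fun_prop) hTm]
    simp_rw [hTi.edist_eq]
    exact lint_lt_top hp hμ 0
  have hν := hb.mapsTo hmem
  have hpot : ∀ x, ∫ y, dist y x ^ p ∂μ = ∫ y, dist y x ^ p ∂(Φ (μ.map T)) := by
    intro x
    have h1 := hd _ hmem _ (dirac_mem p hp (T x))
    have hm : Measurable (fun y : ℝ × ℝ => dist y (T x) ^ p) := by fun_prop
    rw [hT, W_dirac_right hp hν, W_dirac_right hp hmem,
      integral_map hTm.aemeasurable hm.aestronglyMeasurable] at h1
    simp_rw [hiso] at h1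
    exact ((Real.rpow_left_inj (int_nonneg _ _ _) (int_nonneg _ _ _) (by positivity)).1 h1).symm
  have hsupp' : ∃ e : ℝ, (e = 1 ∨ e = -1) ∧ ∀ᵐ y ∂μ, y.1 - e * y.2 = 0 := by
    have hae : ∀ᵐ y ∂μ, y ∈ msupport μ := null_compl_support μ
    rcases hsupp with h | h
    · refine ⟨1, Or.inl rfl, ?_⟩
      filter_upwards [hae] with y hy
      have : y.2 = y.1 := h hy
      linarith
    · refine ⟨-1, Or.inr rfl, ?_⟩
      filter_upwards [hae] with y hy
      have : y.2 = -y.1 := h hy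
      linarith
  obtain ⟨e, he, hs⟩ := hsupp'
  have he' : -e = 1 ∨ -e = -1 := by rcases he with rfl | rfl <;> simp
  exact (eq_of_line e he (marginal_eq hp hμ hν hpot e he)
    (marginal_eq hp hμ hν hpot (-e) he') hs).symm
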